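/- Let σ > 2. There exists B₀ > 0 (depending only on σ) such that for every real B ≥ B₀ and every finitely supported l : ℤ → ℤ with Σ_{n∈ℤ} |l_n|·ln^σ⌊n⌋ ≤ B, one has Π_{n∈ℤ} (1 + l_n²·⟨n⟩⁴)^{−1} ≥ exp( −100·B·(ln B)^{1−σ} ). -/

import Mathlib

/-- `ln^σ⌊n⌋` for an integer `n`, where `⌊n⌋ = max{c, |n|}`. -/
noncomputable def lnZ (c σ : ℝ) (n : ℤ) : ℝ := Real.log (max c |(n : ℝ)|) ^ σ

/-- `⟨n⟩ = max{1, |n|}` for an integer `n`, as a real number. -/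
def bra (n : ℤ) : ℝ := max 1 |(n : ℝ)|

/-!
Taking logarithms, each factor costs at most `1 + 2 log |lₙ| + 4 log ⟨n⟩`. Cut at `|n| = N`.
At most `2N + 1` sites lie below the cutoff, and each costs `O(log B)` because the weight constraint
forces `|lₙ| ≤ B`. Above the cutoff a site costs at most `5 |lₙ| log⌊n⌋`, and
`log⌊n⌋ ≤ (log N) ^ (1 - σ) * log ^ σ ⌊n⌋`, so together these sites cost at most
`5 B (log N) ^ (1 - σ)`. Taking `N = B ^ θ` with `θ < 1` makes the first contribution negligible,
and letting `θ` tend to `1` brings the constant as close to `5` as desired.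
-/

theorem exp_neg_le_prod_inv_of_sum_log_le {ι : Type*} {s : Finset ι} {f : ι → ℝ} {C : ℝ}
    (hf : ∀ i ∈ s, 0 < f i) (hC : ∑ i ∈ s, Real.log (f i) ≤ C) :
    Real.exp (-C) ≤ ∏ i ∈ s, (f i)⁻¹ := by
  rw [Finset.prod_inv_distrib, Real.exp_neg]
  gcongr
  · exact Finset.prod_pos hf
  · rw [← Real.log_le_iff_le_exp (Finset.prod_pos hf), Real.log_prod fun i hi => (hf i hi).ne']
    exact hC

theorem le_rpow_mul_rpow_one_sub {x y σ : ℝ} (hσ : 1 ≤ σ) (hy : 0 < y) (hyx : y ≤ x) :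
    x ≤ x ^ σ * y ^ (1 - σ) := by
  have hx : 0 < x := hy.trans_le hyx
  calc x = x ^ σ * x ^ (1 - σ) := by rw [← Real.rpow_add hx, add_sub_cancel, Real.rpow_one]
    _ ≤ x ^ σ * y ^ (1 - σ) :=
      mul_le_mul_of_nonneg_left (Real.rpow_le_rpow_of_nonpos hy hyx (by linarith)) (by positivity)

theorem card_filter_abs_le (s : Finset ℤ) {N : ℝ} (hN : 0 ≤ N) :
    ((s.filter fun n : ℤ => |(n : ℝ)| ≤ N).card : ℝ) ≤ 2 * N + 1 := by
  have hsub : s.filter (fun n : ℤ => |(n : ℝ)| ≤ N) ⊆ Finset.Icc (-⌊N⌋) ⌊N⌋ := by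
    intro n hn
    rw [Finset.mem_Icc, ← abs_le, Int.le_floor, Int.cast_abs]
    exact (Finset.mem_filter.1 hn).2
  have hcard : ((s.filter fun n : ℤ => |(n : ℝ)| ≤ N).card : ℤ) ≤ 2 * ⌊N⌋ + 1 := by
    have hle := Finset.card_le_card hsub
    rw [Int.card_Icc] at hle
    have hfloor : 0 ≤ ⌊N⌋ := Int.floor_nonneg.2 hN
    omega
  calc ((s.filter fun n : ℤ => |(n : ℝ)| ≤ N).card : ℝ) ≤ 2 * (⌊N⌋ : ℝ) + 1 := mod_cast hcard
    _ ≤ 2 * N + 1 := by linarith [Int.floor_le N]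

theorem eventually_mul_rpow_mul_log_le {θ : ℝ} (hθ : θ < 1) (σ : ℝ) {C ε : ℝ} (hC : 0 < C)
    (hε : 0 < ε) :
    ∀ᶠ B in Filter.atTop,
      C * (B ^ θ * Real.log B) ≤ ε * (B * Real.log B ^ (1 - σ)) := by
  have hlittle := (isLittleO_log_rpow_rpow_atTop σ (sub_pos.2 hθ)).bound (div_pos hε hC)
  filter_upwards [hlittle, Filter.eventually_gt_atTop 1] with B hbound hB
  have hB0 : 0 < B := one_pos.trans hB
  have hL : 0 < Real.log B := Real.log_pos hB
  rw [Real.norm_of_nonneg (by positivity), Real.norm_of_nonneg (by positivity)] at hbound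
  have hlog : Real.log B = Real.log B ^ σ * Real.log B ^ (1 - σ) := by
    rw [← Real.rpow_add hL, add_sub_cancel, Real.rpow_one]
  have hpow : B ^ θ * B ^ (1 - θ) = B := by
    rw [← Real.rpow_add hB0, add_sub_cancel, Real.rpow_one]
  calc C * (B ^ θ * Real.log B)
      = C * B ^ θ * Real.log B ^ σ * Real.log B ^ (1 - σ) := by
        nth_rewrite 1 [hlog]
        ring
    _ ≤ C * B ^ θ * (ε / C * B ^ (1 - θ)) * Real.log B ^ (1 - σ) := by gcongr
    _ = ε * ((B ^ θ * B ^ (1 - θ)) * Real.log B ^ (1 - σ)) := by field_simp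
    _ = ε * (B * Real.log B ^ (1 - σ)) := by rw [hpow]

theorem exists_mem_Ioo_mul_rpow_lt (p : ℝ) {a κ : ℝ} (haκ : a < κ) :
    ∃ θ ∈ Set.Ioo (0 : ℝ) 1, a * θ ^ p < κ := by
  have hcont : ContinuousAt (fun θ : ℝ => a * θ ^ p) 1 :=
    continuousAt_const.mul (Real.continuousAt_rpow_const 1 p (Or.inl one_ne_zero))
  have hlt : ∀ᶠ θ in nhdsWithin (1 : ℝ) (Set.Iio 1), a * θ ^ p < κ :=
    (hcont.eventually_lt_const (by simpa using haκ)).filter_mono nhdsWithin_le_nhds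
  exact (Filter.Eventually.and (Ioo_mem_nhdsLT one_pos) hlt).exists

theorem log_one_add_sq_mul_pow_four_le {a b : ℝ} (ha : 1 ≤ |a|) (hb : 1 ≤ b) :
    Real.log (1 + a ^ 2 * b ^ 4) ≤ 1 + 2 * Real.log |a| + 4 * Real.log b := by
  have hab : 1 ≤ |a| ^ 2 * b ^ 4 :=
    one_le_mul_of_one_le_of_one_le (one_le_pow₀ ha) (one_le_pow₀ hb)
  rw [← sq_abs]
  calc Real.log (1 + |a| ^ 2 * b ^ 4)
      ≤ Real.log (2 * (|a| ^ 2 * b ^ 4)) := Real.log_le_log (by positivity) (by linarith)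
    _ = Real.log 2 + (2 * Real.log |a| + 4 * Real.log b) := by
      rw [Real.log_mul (by positivity) (by positivity),
        Real.log_mul (by positivity) (by positivity), Real.log_pow, Real.log_pow]
      norm_num
    _ ≤ 1 + 2 * Real.log |a| + 4 * Real.log b := by linarith [Real.log_two_lt_d9]

theorem log_one_add_sq_mul_pow_four_le_seven_mul_log {a b B : ℝ} (ha : 1 ≤ |a|) (haB : |a| ≤ B)
    (hb : 1 ≤ b) (hbB : b ≤ B) (hB : Real.exp 1 ≤ B) :
    Real.log (1 + a ^ 2 * b ^ 4) ≤ 7 * Real.log B := by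
  have hlogB : 1 ≤ Real.log B :=
    (Real.le_log_iff_exp_le ((Real.exp_pos 1).trans_le hB)).2 hB
  have hloga : Real.log |a| ≤ Real.log B := Real.log_le_log (by linarith) haB
  have hlogb : Real.log b ≤ Real.log B := Real.log_le_log (by linarith) hbB
  linarith [log_one_add_sq_mul_pow_four_le ha hb]

theorem log_one_add_sq_mul_pow_four_le_five_mul {a b M : ℝ} (ha : 1 ≤ |a|) (hb : 1 ≤ b)
    (hM : 1 ≤ M) (hbM : Real.log b ≤ M) :
    Real.log (1 + a ^ 2 * b ^ 4) ≤ 5 * (|a| * M) := by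
  have hloga : Real.log |a| ≤ |a| - 1 := Real.log_le_sub_one_of_pos (by linarith)
  have hprod : 0 ≤ (|a| - 1) * (M - 1) := mul_nonneg (sub_nonneg.2 ha) (sub_nonneg.2 hM)
  linarith [log_one_add_sq_mul_pow_four_le ha hb]

theorem one_le_bra (n : ℤ) : 1 ≤ bra n := le_max_left _ _

theorem one_le_abs_of_mem_support {l : ℤ →₀ ℤ} {n : ℤ} (hn : n ∈ l.support) :
    1 ≤ |(l n : ℝ)| :=
  mod_cast Int.one_le_abs (Finsupp.mem_support_iff.1 hn)

section Weights

variable {c σ : ℝ}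

theorem one_le_log_max (hc : Real.exp 1 ≤ c) (x : ℝ) : 1 ≤ Real.log (max c x) := by
  have hmax : Real.exp 1 ≤ max c x := hc.trans (le_max_left _ _)
  exact (Real.le_log_iff_exp_le ((Real.exp_pos 1).trans_le hmax)).2 hmax

theorem one_le_lnZ (hc : Real.exp 1 ≤ c) (hσ : 0 ≤ σ) (n : ℤ) : 1 ≤ lnZ c σ n :=
  Real.one_le_rpow (one_le_log_max hc _) hσ

theorem log_bra_le_log_max (hc : 1 ≤ c) (n : ℤ) :
    Real.log (bra n) ≤ Real.log (max c |(n : ℝ)|) :=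
  Real.log_le_log (one_pos.trans_le (one_le_bra n)) (max_le_max_right _ hc)

theorem log_max_le_lnZ_mul_rpow (hσ : 1 ≤ σ) {N : ℝ} (hN : 1 < N) {n : ℤ}
    (hn : N ≤ |(n : ℝ)|) :
    Real.log (max c |(n : ℝ)|) ≤ lnZ c σ n * Real.log N ^ (1 - σ) :=
  le_rpow_mul_rpow_one_sub hσ (Real.log_pos hN)
    (Real.log_le_log (one_pos.trans hN) (hn.trans (le_max_right _ _)))

theorem abs_le_of_sum_abs_mul_lnZ_le (hc : Real.exp 1 ≤ c) (hσ : 0 ≤ σ) {B : ℝ} {l : ℤ →₀ ℤ}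
    (hl : ∑ n ∈ l.support, |(l n : ℝ)| * lnZ c σ n ≤ B) {n : ℤ} (hn : n ∈ l.support) :
    |(l n : ℝ)| ≤ B := by
  have hweight (m : ℤ) : 1 ≤ lnZ c σ m := one_le_lnZ hc hσ m
  calc |(l n : ℝ)| ≤ |(l n : ℝ)| * lnZ c σ n :=
        le_mul_of_one_le_right (abs_nonneg _) (hweight n)
    _ ≤ ∑ m ∈ l.support, |(l m : ℝ)| * lnZ c σ m :=
        Finset.single_le_sum (f := fun m => |(l m : ℝ)| * lnZ c σ m)
          (fun m _ => mul_nonneg (abs_nonneg _) (one_pos.le.trans (hweight m))) hn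
    _ ≤ B := hl

theorem sum_log_low_modes_le {B N : ℝ} (hB : Real.exp 1 ≤ B) (hN : 0 ≤ N) (hNB : N ≤ B)
    {l : ℤ →₀ ℤ} (hl : ∀ n ∈ l.support, |(l n : ℝ)| ≤ B) :
    ∑ n ∈ l.support.filter (fun n : ℤ => |(n : ℝ)| ≤ N),
        Real.log (1 + (l n : ℝ) ^ 2 * bra n ^ 4)
      ≤ (2 * N + 1) * (7 * Real.log B) := by
  have hB1 : 1 ≤ B := (Real.one_le_exp zero_le_one).trans hB
  have hterm : ∀ n ∈ l.support.filter (fun n : ℤ => |(n : ℝ)| ≤ N),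
      Real.log (1 + (l n : ℝ) ^ 2 * bra n ^ 4) ≤ 7 * Real.log B := by
    intro n hn
    obtain ⟨hmem, hnN⟩ := Finset.mem_filter.1 hn
    exact log_one_add_sq_mul_pow_four_le_seven_mul_log (one_le_abs_of_mem_support hmem)
      (hl n hmem) (one_le_bra n) (max_le hB1 (hnN.trans hNB)) hB
  have hlogB : 0 ≤ Real.log B := Real.log_nonneg hB1
  calc _ ≤ _ := Finset.sum_le_card_nsmul _ _ _ hterm
    _ ≤ (2 * N + 1) * (7 * Real.log B) := by
      rw [nsmul_eq_mul]
      exact mul_le_mul_of_nonneg_right (card_filter_abs_le _ hN) (by positivity)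

theorem sum_log_high_modes_le (hc : Real.exp 1 ≤ c) (hσ : 1 ≤ σ) {N : ℝ} (hN : 1 < N)
    (l : ℤ →₀ ℤ) :
    ∑ n ∈ l.support.filter (fun n : ℤ => ¬|(n : ℝ)| ≤ N),
        Real.log (1 + (l n : ℝ) ^ 2 * bra n ^ 4)
      ≤ 5 * Real.log N ^ (1 - σ) * ∑ n ∈ l.support, |(l n : ℝ)| * lnZ c σ n := by
  have hlogN : 0 < Real.log N := Real.log_pos hN
  have hweight (n : ℤ) : 0 ≤ lnZ c σ n :=
    one_pos.le.trans (one_le_lnZ hc (one_pos.le.trans hσ) n)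
  have hterm : ∀ n ∈ l.support.filter (fun n : ℤ => ¬|(n : ℝ)| ≤ N),
      Real.log (1 + (l n : ℝ) ^ 2 * bra n ^ 4)
        ≤ 5 * Real.log N ^ (1 - σ) * (|(l n : ℝ)| * lnZ c σ n) := by
    intro n hn
    obtain ⟨hmem, hnN⟩ := Finset.mem_filter.1 hn
    calc Real.log (1 + (l n : ℝ) ^ 2 * bra n ^ 4)
        ≤ 5 * (|(l n : ℝ)| * Real.log (max c |(n : ℝ)|)) :=
          log_one_add_sq_mul_pow_four_le_five_mul (one_le_abs_of_mem_support hmem) (one_le_bra n)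
            (one_le_log_max hc _)
            (log_bra_le_log_max ((Real.one_le_exp zero_le_one).trans hc) n)
      _ ≤ 5 * (|(l n : ℝ)| * (lnZ c σ n * Real.log N ^ (1 - σ))) := by
          gcongr
          exact log_max_le_lnZ_mul_rpow hσ hN (not_le.1 hnN).le
      _ = 5 * Real.log N ^ (1 - σ) * (|(l n : ℝ)| * lnZ c σ n) := by ring
  calc _ ≤ _ := Finset.sum_le_sum hterm
    _ ≤ ∑ n ∈ l.support, 5 * Real.log N ^ (1 - σ) * (|(l n : ℝ)| * lnZ c σ n) :=
      Finset.sum_le_sum_of_subset_of_nonneg (Finset.filter_subset _ _) fun n _ _ =>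
        mul_nonneg (by positivity) (mul_nonneg (abs_nonneg _) (hweight n))
    _ = _ := (Finset.mul_sum _ _ _).symm

theorem sum_log_le_of_cutoff (hc : Real.exp 1 ≤ c) (hσ : 1 ≤ σ) {B N : ℝ}
    (hB : Real.exp 1 ≤ B) (hN : 1 < N) (hNB : N ≤ B) {l : ℤ →₀ ℤ}
    (hl : ∑ n ∈ l.support, |(l n : ℝ)| * lnZ c σ n ≤ B) :
    ∑ n ∈ l.support, Real.log (1 + (l n : ℝ) ^ 2 * bra n ^ 4)
      ≤ 5 * Real.log N ^ (1 - σ) * B + (2 * N + 1) * (7 * Real.log B) := by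
  have hlogN : 0 < Real.log N := Real.log_pos hN
  have hlow := sum_log_low_modes_le hB (one_pos.trans hN).le hNB fun _ hn =>
    abs_le_of_sum_abs_mul_lnZ_le hc (one_pos.le.trans hσ) hl hn
  have hhigh := (sum_log_high_modes_le hc hσ hN l).trans
    (mul_le_mul_of_nonneg_left hl (by positivity))
  rw [← Finset.sum_filter_add_sum_filter_not l.support fun n : ℤ => |(n : ℝ)| ≤ N]
  linarith

theorem sum_log_le_of_rpow_cutoff (hc : Real.exp 1 ≤ c) (hσ : 1 ≤ σ) {B θ : ℝ}
    (hB : Real.exp 1 ≤ B) (hθ : θ ∈ Set.Ioc 0 1) {l : ℤ →₀ ℤ}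
    (hl : ∑ n ∈ l.support, |(l n : ℝ)| * lnZ c σ n ≤ B) :
    ∑ n ∈ l.support, Real.log (1 + (l n : ℝ) ^ 2 * bra n ^ 4)
      ≤ 5 * θ ^ (1 - σ) * (B * Real.log B ^ (1 - σ)) + 21 * (B ^ θ * Real.log B) := by
  have hB1 : 1 < B := (Real.one_lt_exp_iff.2 one_pos).trans_le hB
  have hlogB : 0 < Real.log B := Real.log_pos hB1
  have hN : 1 < B ^ θ := Real.one_lt_rpow hB1 hθ.1
  have hNB : B ^ θ ≤ B := Real.rpow_le_self_of_one_le hB1.le hθ.2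
  calc ∑ n ∈ l.support, Real.log (1 + (l n : ℝ) ^ 2 * bra n ^ 4)
      ≤ 5 * Real.log (B ^ θ) ^ (1 - σ) * B + (2 * B ^ θ + 1) * (7 * Real.log B) :=
        sum_log_le_of_cutoff hc hσ hB hN hNB hl
    _ ≤ 5 * Real.log (B ^ θ) ^ (1 - σ) * B + (2 * B ^ θ + B ^ θ) * (7 * Real.log B) := by gcongr
    _ = 5 * θ ^ (1 - σ) * (B * Real.log B ^ (1 - σ)) + 21 * (B ^ θ * Real.log B) := by
        rw [Real.log_rpow (one_pos.trans hB1), Real.mul_rpow hθ.1.le hlogB.le]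
        ring

end Weights

theorem full_dim_KAM_stmt12_general {σ κ : ℝ} (hσ : 1 ≤ σ) (hκ : 5 < κ) :
    ∃ B₀ : ℝ, 0 < B₀ ∧ ∀ c : ℝ, Real.exp 1 ≤ c → ∀ B : ℝ, B₀ ≤ B → ∀ l : ℤ →₀ ℤ,
      ∑ n ∈ l.support, |(l n : ℝ)| * lnZ c σ n ≤ B →
      Real.exp (-(κ * B * Real.log B ^ (1 - σ)))
        ≤ ∏ n ∈ l.support, (1 + (l n : ℝ) ^ 2 * bra n ^ 4)⁻¹ := by
  obtain ⟨θ, ⟨hθ0, hθ1⟩, hθκ⟩ := exists_mem_Ioo_mul_rpow_lt (1 - σ) hκ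
  obtain ⟨B₁, hB₁⟩ := Filter.eventually_atTop.1
    (eventually_mul_rpow_mul_log_le hθ1 σ (C := 21) (by norm_num) (sub_pos.2 hθκ))
  refine ⟨max B₁ (Real.exp 1), lt_max_of_lt_right (Real.exp_pos 1), fun c hc B hB l hl => ?_⟩
  obtain ⟨hBB₁, hBe⟩ := max_le_iff.1 hB
  refine exp_neg_le_prod_inv_of_sum_log_le (fun n _ => ?_) ?_
  · have := one_le_bra n
    positivity
  · linarith [sum_log_le_of_rpow_cutoff hc hσ hBe ⟨hθ0, hθ1.le⟩ hl, hB₁ B hBB₁]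

/-- lower bound (103) on the Diophantine small-divisor product, from the proof
of the iterative Lemma 4.1. There is `B₀ > 0` (depending only on `σ`, via `c = c(σ)`) such that
for every `B ≥ B₀` and every finitely supported `l : ℤ → ℤ` with `∑ₙ |lₙ|·ln^σ⌊n⌋ ≤ B`,
`∏ₙ (1 + lₙ²·⟨n⟩⁴)⁻¹ ≥ exp(−100·B·(ln B)^{1−σ})`.
(All factors with `lₙ = 0` equal `1`, so the product is taken over the support of `l`.) -/
theorem full_dim_KAM_stmt12 (σ : ℝ) (hσ : 2 < σ) (c : ℝ) (hc : Real.exp 1 ≤ c)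
    (hsub : ∀ x y : ℝ, c ≤ y → y ≤ x →
      Real.log (x + y) ^ σ ≤ Real.log x ^ σ + (1 / 2) * Real.log y ^ σ) :
    ∃ B₀ : ℝ, 0 < B₀ ∧ ∀ B : ℝ, B₀ ≤ B → ∀ l : ℤ →₀ ℤ,
      (∑ n ∈ l.support, (|l n| : ℝ) * lnZ c σ n) ≤ B →
      ∏ n ∈ l.support, (1 + (l n : ℝ) ^ 2 * bra n ^ 4)⁻¹
        ≥ Real.exp (-(100 * B * Real.log B ^ (1 - σ))) := by
  obtain ⟨B₀, hB₀, hbound⟩ :=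
    full_dim_KAM_stmt12_general (one_lt_two.trans hσ).le (by norm_num : (5 : ℝ) < 100)
  exact ⟨B₀, hB₀, hbound c hc⟩
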